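/- arXiv:1705.06500 — 5 statements merged into one kernel-verified Lean document; each statement's English description precedes it below -/
import Mathlib

section
/- (Lemma 1, scaling of transmit power) For every coverage radius R_b > 0, user density λ ≥ 0, hovering altitude h ≥ 0 and data rate S, the expected transmit power factors as P_t(R_b, λ, h, S) = λ·R_b⁴·(2^S − 1)·Γ(h/R_b), where Γ is the kernel function of transmit power. -/
open Real MeasureTheory intervalIntegral

/-- Lemma 1: Scaling of the expected transmit power:
`P_t(R_b, λ, h, S) = λ · R_b⁴ · (2^S − 1) · Γ(h / R_b)`. -/
theorem transmit_power_scaling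
    (a b η₀ η₁ K N₀ : ℝ) (ha : 0 < a) (hb : 0 < b) (hη₀ : 0 < η₀) (hη₁ : 0 < η₁)
    (hK : 0 < K) (hN₀ : 0 < N₀)
    (θ P₀ L : ℝ → ℝ → ℝ) (Pt : ℝ → ℝ → ℝ → ℝ → ℝ) (Γ : ℝ → ℝ)
    (hθ : ∀ R h : ℝ, θ R h = (180 / π) * arctan (h / R))
    (hP₀ : ∀ R h : ℝ, P₀ R h = 1 / (1 + a * exp (-b * (θ R h - a))))
    (hL : ∀ R h : ℝ, L R h = K * (R ^ 2 + h ^ 2) * (η₁ + P₀ R h * (η₀ - η₁)))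
    (hPt : ∀ Rb lam h S : ℝ,
      Pt Rb lam h S = lam * ((2 : ℝ) ^ S - 1) * ∫ R in (0 : ℝ)..Rb, 2 * π * R * L R h * N₀)
    (hΓ : ∀ x : ℝ, Γ x = ∫ R in (0 : ℝ)..(1 : ℝ), 2 * π * R * L R x * N₀)
    (Rb lam h S : ℝ) (hRb : 0 < Rb) (hlam : 0 ≤ lam) (hh : 0 ≤ h) :
    Pt Rb lam h S = lam * Rb ^ 4 * ((2 : ℝ) ^ S - 1) * Γ (h / Rb) := by
  have hRb' : Rb ≠ 0 := hRb.ne'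
  have L_scale : ∀ R : ℝ, L (Rb * R) h = Rb ^ 2 * L R (h / Rb) := by
    intro R
    have hang : h / (Rb * R) = h / Rb / R := (div_div h Rb R).symm
    rw [hL, hL, hP₀, hP₀, hθ, hθ, hang]
    have hsq : (Rb * R) ^ 2 + h ^ 2 = Rb ^ 2 * (R ^ 2 + (h / Rb) ^ 2) := by
      field_simp
    rw [hsq]
    ring
  have integral_scale : ∫ R in (0 : ℝ)..Rb, 2 * π * R * L R h * N₀ =
      Rb ^ 4 * ∫ R in (0 : ℝ)..(1 : ℝ), 2 * π * R * L R (h / Rb) * N₀ := by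
    have hsub := intervalIntegral.mul_integral_comp_mul_left (a := 0) (b := 1)
      (f := fun R => 2 * π * R * L R h * N₀) Rb
    rw [mul_zero, mul_one] at hsub
    rw [← hsub, ← intervalIntegral.integral_const_mul, ← intervalIntegral.integral_const_mul]
    congr 1
    funext R
    rw [L_scale]
    ring
  rw [hPt, hΓ, integral_scale]
  ring
end

section
/- (Corollary 1) Fix a coverage radius R_b > 0, user density λ > 0 and data rate S > 0. A hovering altitude h* ≥ 0 minimizes the function h ↦ P_t(R_b, λ, h, S) over [0,∞) if and only if the normalized altitude h*/R_b minimizes the kernel function Γ over [0,∞). In particular, if h_n* minimizes Γ on [0,∞), then the optimal hovering altitude is h* = R_b·h_n*, i.e. it is proportional to the coverage radius with a slope depending only on the environment. -/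
open Real MeasureTheory intervalIntegral

/-- If `f` is homogeneous of degree `n` under joint scaling by `c`, then its first-moment integral
over `[0, c]` scales with degree `n + 2`. -/
lemma integral_mul_of_homogeneous {f : ℝ → ℝ → ℝ} {c : ℝ} {n : ℕ}
    (hf : ∀ R x, f (c * R) (c * x) = c ^ n * f R x) (p q x : ℝ) :
    ∫ R in (0 : ℝ)..c, p * R * f R (c * x) * q =
      c ^ (n + 2) * ∫ R in (0 : ℝ)..1, p * R * f R x * q := by
  have h := smul_integral_comp_mul_left (a := 0) (b := 1)
    (fun R => p * R * f R (c * x) * q) c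
  rw [mul_zero, mul_one] at h
  rw [← h, smul_eq_mul, ← intervalIntegral.integral_const_mul,
    ← intervalIntegral.integral_const_mul]
  congr 1
  ext R
  rw [hf]
  ring

/-- Minimizers on `[0, ∞)` are carried along a positive rescaling of the argument and the value. -/
lemma isMinOn_Ici_iff_of_scaling {f g : ℝ → ℝ} {c C : ℝ} (hc : 0 < c) (hC : 0 < C)
    (hfg : ∀ x, f (c * x) = C * g x) (y : ℝ) :
    IsMinOn f (Set.Ici 0) (c * y) ↔ IsMinOn g (Set.Ici 0) y := by
  simp only [isMinOn_iff, Set.mem_Ici]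
  constructor
  · intro h x hx
    have hle := h (c * x) (mul_nonneg hc.le hx)
    rw [hfg, hfg] at hle
    exact le_of_mul_le_mul_left hle hC
  · intro h x hx
    have hle := mul_le_mul_of_nonneg_left (h (x / c) (div_nonneg hx hc.le)) hC.le
    rwa [← hfg, ← hfg, mul_div_cancel₀ x hc.ne'] at hle

/-- Corollary 1: `h*` minimizes `h ↦ P_t(R_b, λ, h, S)` on `[0,∞)` iff
`h*/R_b` minimizes the kernel `Γ` on `[0,∞)`; in particular, if `h_n*` minimizes `Γ`
on `[0,∞)` then `R_b · h_n*` minimizes the transmit power, i.e. the optimal altitude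
is proportional to the coverage radius. -/
theorem optimal_altitude_proportional_to_radius
    (a b η₀ η₁ K N₀ : ℝ) (ha : 0 < a) (hb : 0 < b) (hη₀ : 0 < η₀) (hη₁ : 0 < η₁)
    (hK : 0 < K) (hN₀ : 0 < N₀)
    (θ P₀ L : ℝ → ℝ → ℝ) (Pt : ℝ → ℝ → ℝ → ℝ → ℝ) (Γ : ℝ → ℝ)
    (hθ : ∀ R h : ℝ, θ R h = (180 / π) * arctan (h / R))
    (hP₀ : ∀ R h : ℝ, P₀ R h = 1 / (1 + a * exp (-b * (θ R h - a))))
    (hL : ∀ R h : ℝ, L R h = K * (R ^ 2 + h ^ 2) * (η₁ + P₀ R h * (η₀ - η₁)))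
    (hPt : ∀ Rb lam h S : ℝ,
      Pt Rb lam h S = lam * ((2 : ℝ) ^ S - 1) * ∫ R in (0 : ℝ)..Rb, 2 * π * R * L R h * N₀)
    (hΓ : ∀ x : ℝ, Γ x = ∫ R in (0 : ℝ)..(1 : ℝ), 2 * π * R * L R x * N₀)
    (Rb lam S : ℝ) (hRb : 0 < Rb) (hlam : 0 < lam) (hS : 0 < S) :
    (∀ hstar : ℝ, 0 ≤ hstar →
      (IsMinOn (fun h : ℝ => Pt Rb lam h S) (Set.Ici 0) hstar ↔
        IsMinOn Γ (Set.Ici 0) (hstar / Rb))) ∧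
    (∀ hn : ℝ, 0 ≤ hn → IsMinOn Γ (Set.Ici 0) hn →
      IsMinOn (fun h : ℝ => Pt Rb lam h S) (Set.Ici 0) (Rb * hn)) := by
  have hLscale : ∀ R x, L (Rb * R) (Rb * x) = Rb ^ 2 * L R x := by
    intro R x
    have hPscale : P₀ (Rb * R) (Rb * x) = P₀ R x := by
      rw [hP₀, hP₀, hθ, hθ, mul_div_mul_left x R hRb.ne']
    rw [hL, hL, hPscale]
    ring
  have hrate : 0 < (2 : ℝ) ^ S - 1 := sub_pos.2 (one_lt_rpow one_lt_two hS)
  have hscale : ∀ x, Pt Rb lam (Rb * x) S = lam * ((2 : ℝ) ^ S - 1) * Rb ^ 4 * Γ x := by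
    intro x
    rw [hPt, hΓ, integral_mul_of_homogeneous hLscale, mul_assoc _ (Rb ^ 4)]
  have hiff := isMinOn_Ici_iff_of_scaling (f := fun h => Pt Rb lam h S) hRb
    (by positivity : 0 < lam * ((2 : ℝ) ^ S - 1) * Rb ^ 4) hscale
  refine ⟨fun hstar _ => ?_, fun hn _ hmin => (hiff hn).2 hmin⟩
  rw [← hiff, mul_div_cancel₀ hstar hRb.ne']
end

section
/- The kernel function of transmit power grows at least quadratically in the normalized altitude: for every h ≥ 0, Γ(h) ≥ 2π·N₀·K·min(η₀, η₁)·(1/4 + h²/2); consequently Γ(h) → ∞ as h → ∞. -/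
open Real MeasureTheory intervalIntegral Filter

/-- A real number `y + p * (x - y)` with `p ∈ [0, 1]` lies between `min x y` and `max x y`. -/
theorem add_mul_sub_mem_Icc_min_max {x y p : ℝ} (hp₀ : 0 ≤ p) (hp₁ : p ≤ 1) :
    y + p * (x - y) ∈ Set.Icc (min x y) (max x y) := by
  constructor
  · nlinarith [mul_nonneg hp₀ (sub_nonneg.2 (min_le_left x y)),
      mul_nonneg (sub_nonneg.2 hp₁) (sub_nonneg.2 (min_le_right x y))]
  · nlinarith [mul_nonneg hp₀ (sub_nonneg.2 (le_max_left x y)),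
      mul_nonneg (sub_nonneg.2 hp₁) (sub_nonneg.2 (le_max_right x y))]

theorem integral_mul_sq_add_sq (c h : ℝ) :
    ∫ R in (0 : ℝ)..1, c * (R * (R ^ 2 + h ^ 2)) = c * (1 / 4 + h ^ 2 / 2) := by
  have hderiv : ∀ R ∈ Set.uIcc (0 : ℝ) 1,
      HasDerivAt (fun R : ℝ => c * (R ^ 4 / 4 + h ^ 2 * (R ^ 2 / 2)))
        (c * (R * (R ^ 2 + h ^ 2))) R := fun R _ => by
    have h4 := (hasDerivAt_pow 4 R).div_const 4
    have h2 := ((hasDerivAt_pow 2 R).div_const 2).const_mul (h ^ 2)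
    refine ((h4.add h2).const_mul c).congr_deriv ?_
    norm_num
    left
    ring
  rw [integral_eq_sub_of_hasDerivAt hderiv (Continuous.intervalIntegrable (by fun_prop) 0 1)]
  ring

/-- A measurable weight `w` with values in `[m, M]`, `0 ≤ m`, can be replaced by `m` to bound
from below its integral against a nonnegative multiple of `R * (R ^ 2 + h ^ 2)`. -/
theorem mul_le_integral_mul_sq_add_sq_mul {c m M : ℝ} (h : ℝ) {w : ℝ → ℝ} (hc : 0 ≤ c)
    (hm : 0 ≤ m) (hw : Measurable w) (hwmem : ∀ R, w R ∈ Set.Icc m M) :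
    c * m * (1 / 4 + h ^ 2 / 2) ≤ ∫ R in (0 : ℝ)..1, c * (R * (R ^ 2 + h ^ 2)) * w R := by
  have hint : IntervalIntegrable (fun R => c * (R * (R ^ 2 + h ^ 2)) * w R) volume 0 1 := by
    refine IntervalIntegrable.mono_fun'
      (g := fun R => |c * (R * (R ^ 2 + h ^ 2))| * M)
      (Continuous.intervalIntegrable (by fun_prop) 0 1)
      (Measurable.aestronglyMeasurable (by fun_prop)) (.of_forall fun R => ?_)
    dsimp only
    rw [norm_mul, norm_eq_abs, norm_of_nonneg (hm.trans (hwmem R).1)]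
    exact mul_le_mul_of_nonneg_left (hwmem R).2 (abs_nonneg _)
  rw [← integral_mul_sq_add_sq]
  refine integral_mono_on zero_le_one (Continuous.intervalIntegrable (by fun_prop) 0 1) hint
    fun R hR => ?_
  have hR₀ : 0 ≤ R := hR.1
  rw [mul_right_comm]
  exact mul_le_mul_of_nonneg_left (hwmem R).1 (by positivity)

/-- The kernel function grows at least quadratically in the normalized
altitude: `Γ(h) ≥ 2π·N₀·K·min(η₀,η₁)·(1/4 + h²/2)` for all `h ≥ 0`; consequently
`Γ(h) → ∞` as `h → ∞`. -/
theorem kernel_function_quadratic_growth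
    (a b η₀ η₁ K N₀ : ℝ) (ha : 0 < a) (hb : 0 < b) (hη₀ : 0 < η₀) (hη₁ : 0 < η₁)
    (hK : 0 < K) (hN₀ : 0 < N₀)
    (θ P₀ L : ℝ → ℝ → ℝ) (Γ : ℝ → ℝ)
    (hθ : ∀ R h : ℝ, θ R h = (180 / π) * arctan (h / R))
    (hP₀ : ∀ R h : ℝ, P₀ R h = 1 / (1 + a * exp (-b * (θ R h - a))))
    (hL : ∀ R h : ℝ, L R h = K * (R ^ 2 + h ^ 2) * (η₁ + P₀ R h * (η₀ - η₁)))
    (hΓ : ∀ x : ℝ, Γ x = ∫ R in (0 : ℝ)..(1 : ℝ), 2 * π * R * L R x * N₀) :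
    (∀ h : ℝ, 0 ≤ h →
      Γ h ≥ 2 * π * N₀ * K * min η₀ η₁ * (1 / 4 + h ^ 2 / 2)) ∧
    Tendsto Γ atTop atTop := by
  have hmin : 0 < min η₀ η₁ := lt_min hη₀ hη₁
  have hbound : ∀ h : ℝ, 2 * π * N₀ * K * min η₀ η₁ * (1 / 4 + h ^ 2 / 2) ≤ Γ h := by
    intro h
    have hmeas : Measurable fun R => η₁ + P₀ R h * (η₀ - η₁) := by
      simp only [hP₀, hθ]
      fun_prop
    have hmem : ∀ R, η₁ + P₀ R h * (η₀ - η₁) ∈ Set.Icc (min η₀ η₁) (max η₀ η₁) := by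
      intro R
      have hden : 0 ≤ a * exp (-b * (θ R h - a)) := by positivity
      rw [hP₀]
      exact add_mul_sub_mem_Icc_min_max (by positivity)
        (div_le_one_of_le₀ (by linarith) (by linarith))
    refine (mul_le_integral_mul_sq_add_sq_mul h (by positivity) hmin.le hmeas hmem).trans_eq ?_
    rw [hΓ]
    congr 1 with R
    rw [hL]
    ring
  refine ⟨fun h _ => hbound h, tendsto_atTop_mono hbound ?_⟩
  refine Tendsto.const_mul_atTop (by positivity) (tendsto_atTop_add_const_left _ _ ?_)
  exact (tendsto_pow_atTop two_ne_zero).atTop_div_const two_pos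
end

section
/- (Differentiation of the kernel function, Eq. (12)) For every h₀ > 0, the kernel function Γ is differentiable at h₀ with derivative Γ'(h₀) = ∫₀¹ 2πR·N₀·K·[ 2h₀·(η₁ + P₀(R,h₀)·(η₀ − η₁)) + (180·b·R/π)·(η₀ − η₁)·P₀(R,h₀)·(1 − P₀(R,h₀)) ] dR. -/
open Real MeasureTheory intervalIntegral

/-- The derivative in the altitude of the logistic line-of-sight probability. -/
lemma hasDerivAt_logistic_elevation {a : ℝ} (ha : 0 < a) (b : ℝ) {R : ℝ} (hR : 0 < R) (x : ℝ) :
    HasDerivAt (fun h => 1 / (1 + a * exp (-b * (180 / π * arctan (h / R) - a))))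
      (180 * b * R / π / (R ^ 2 + x ^ 2) *
        (1 / (1 + a * exp (-b * (180 / π * arctan (x / R) - a)))) *
        (1 - 1 / (1 + a * exp (-b * (180 / π * arctan (x / R) - a))))) x := by
  have hden : 0 < 1 + a * exp (-b * (180 / π * arctan (x / R) - a)) := by positivity
  have hangle := (((((hasDerivAt_id x).div_const R).arctan.const_mul (180 / π)).sub_const
    a).const_mul (-b)).exp
  have hinv := ((hangle.const_mul a).const_add 1).inv hden.ne'
  simp only [one_div]
  refine hinv.congr_deriv ?_
  simp only [id]
  generalize exp (-b * (180 / π * arctan (x / R) - a)) = e at hden ⊢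
  have hsq : R ^ 2 + x ^ 2 ≠ 0 := by positivity
  field_simp
  ring

/-- A convex combination of two positive numbers is bounded by their sum. -/
lemma abs_convex_combination_le_add {u v p : ℝ} (hu : 0 < u) (hv : 0 < v) (hp : 0 ≤ p)
    (hp' : p ≤ 1) : |v + p * (u - v)| ≤ u + v := by
  rw [abs_le]
  constructor <;> nlinarith [mul_nonneg hp hu.le, mul_nonneg hp hv.le,
    mul_nonneg (sub_nonneg.2 hp') hu.le, mul_nonneg (sub_nonneg.2 hp') hv.le]

/-- Eq. (12): For every `h₀ > 0`, the kernel function `Γ` is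
differentiable at `h₀` with the stated integral derivative. -/
theorem kernel_function_hasDerivAt
    (a b η₀ η₁ K N₀ : ℝ) (ha : 0 < a) (hb : 0 < b) (hη₀ : 0 < η₀) (hη₁ : 0 < η₁)
    (hK : 0 < K) (hN₀ : 0 < N₀)
    (θ P₀ L : ℝ → ℝ → ℝ) (Γ : ℝ → ℝ)
    (hθ : ∀ R h : ℝ, θ R h = (180 / π) * arctan (h / R))
    (hP₀ : ∀ R h : ℝ, P₀ R h = 1 / (1 + a * exp (-b * (θ R h - a))))
    (hL : ∀ R h : ℝ, L R h = K * (R ^ 2 + h ^ 2) * (η₁ + P₀ R h * (η₀ - η₁)))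
    (hΓ : ∀ x : ℝ, Γ x = ∫ R in (0 : ℝ)..(1 : ℝ), 2 * π * R * L R x * N₀)
    (h₀ : ℝ) (hh₀ : 0 < h₀) :
    HasDerivAt Γ
      (∫ R in (0 : ℝ)..(1 : ℝ), 2 * π * R * N₀ * K *
        (2 * h₀ * (η₁ + P₀ R h₀ * (η₀ - η₁)) +
          (180 * b * R / π) * (η₀ - η₁) * P₀ R h₀ * (1 - P₀ R h₀))) h₀ := by
  have hP_pos : ∀ R h, 0 ≤ P₀ R h := fun R h => by rw [hP₀]; positivity
  have hP_le : ∀ R h, P₀ R h ≤ 1 := fun R h => by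
    rw [hP₀, div_le_one (by positivity)]
    linarith [mul_pos ha (exp_pos (-b * (θ R h - a)))]
  have hP_meas : ∀ h, Measurable fun R => P₀ R h := fun h => by
    simp only [hP₀, hθ]
    fun_prop
  have hP_deriv : ∀ R x, 0 < R → HasDerivAt (P₀ R)
      (180 * b * R / π / (R ^ 2 + x ^ 2) * P₀ R x * (1 - P₀ R x)) x := fun R x hR => by
    have hfun : P₀ R = fun h => 1 / (1 + a * exp (-b * (180 / π * arctan (h / R) - a))) := by
      funext h
      rw [hP₀, hθ]
    rw [hfun]
    exact hasDerivAt_logistic_elevation ha b hR x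
  have hgain : ∀ R x, |η₁ + P₀ R x * (η₀ - η₁)| ≤ η₀ + η₁ := fun R x =>
    abs_convex_combination_le_add hη₀ hη₁ (hP_pos R x) (hP_le R x)
  have hL_meas : ∀ x, Measurable fun R => 2 * π * R * L R x * N₀ := fun x => by
    have := hP_meas x
    simp only [hL]
    fun_prop
  have hdiff : |η₀ - η₁| ≤ η₀ + η₁ := by
    rw [abs_le]
    constructor <;> linarith
  rw [show Γ = fun x => ∫ R in (0 : ℝ)..(1 : ℝ), 2 * π * R * L R x * N₀ from funext hΓ]
  refine (intervalIntegral.hasDerivAt_integral_of_dominated_loc_of_deriv_le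
    (F := fun x R => 2 * π * R * L R x * N₀)
    (F' := fun x R => 2 * π * R * N₀ * K * (2 * x * (η₁ + P₀ R x * (η₀ - η₁)) +
      (180 * b * R / π) * (η₀ - η₁) * P₀ R x * (1 - P₀ R x)))
    (bound := fun _ => 2 * π * 1 * N₀ * K * (2 * (h₀ + 1) * (η₀ + η₁) +
      (180 * b * 1 / π) * (η₀ + η₁) * 1 * 1))
    (Metric.ball_mem_nhds h₀ one_pos)
    (.of_forall fun x => (hL_meas x).aestronglyMeasurable) ?_ ?_ ?_ intervalIntegrable_const ?_).2
  · refine (intervalIntegrable_const (c := 2 * π * 1 * (K * (1 ^ 2 + h₀ ^ 2) * (η₀ + η₁)) * N₀)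
      ).mono_fun (hL_meas h₀).aestronglyMeasurable ?_
    rw [Filter.EventuallyLE, ae_restrict_iff' measurableSet_uIoc]
    refine .of_forall fun R hR => ?_
    rw [Set.uIoc_of_le zero_le_one] at hR
    obtain ⟨hR0, hR1⟩ := hR
    have hsq : 0 ≤ R ^ 2 + h₀ ^ 2 := by positivity
    refine le_trans ?_ (le_abs_self _)
    simp only [hL, norm_eq_abs, abs_mul, abs_two, abs_of_pos pi_pos, abs_of_pos hR0, abs_of_pos hK,
      abs_of_pos hN₀, abs_of_nonneg hsq]
    gcongr
    exact hgain R h₀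
  · have := hP_meas h₀
    exact Measurable.aestronglyMeasurable (by fun_prop)
  · refine .of_forall fun R hR x hx => ?_
    rw [Set.uIoc_of_le zero_le_one] at hR
    obtain ⟨hR0, hR1⟩ := hR
    have hx' : |x| ≤ h₀ + 1 := by
      rw [Metric.mem_ball, dist_eq, abs_lt] at hx
      rw [abs_le]
      constructor <;> linarith
    have hcompl : |1 - P₀ R x| ≤ 1 := by
      rw [abs_le]
      constructor <;> linarith [hP_pos R x, hP_le R x]
    have hP_abs : |P₀ R x| ≤ 1 := by
      rw [abs_of_nonneg (hP_pos R x)]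
      exact hP_le R x
    have hslope : |180 * b * R / π| = 180 * b * R / π := abs_of_pos (by positivity)
    have hfactor : |2 * π * R * N₀ * K| = 2 * π * R * N₀ * K := abs_of_pos (by positivity)
    rw [norm_eq_abs, abs_mul, hfactor]
    gcongr
    refine (abs_add_le _ _).trans ?_
    simp only [abs_mul, hslope, abs_two]
    gcongr
    exact hgain R x
  · refine .of_forall fun R hR x _ => ?_
    rw [Set.uIoc_of_le zero_le_one] at hR
    have hR0 : 0 < R := hR.1
    have hsq : R ^ 2 + x ^ 2 ≠ 0 := by positivity
    simp only [hL]
    refine ((((((hasDerivAt_pow 2 x).const_add (R ^ 2)).const_mul K).mul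
      (((hP_deriv R x hR0).mul_const (η₀ - η₁)).const_add η₁)).const_mul
      (2 * π * R)).mul_const N₀).congr_deriv ?_
    field_simp
    ring
end

section
/- (UAV-recall-frequency expression, Eq. (14)) Fix area A > 0, battery capacity E_b > 0, circuit power P_c ≥ 0, user density λ ≥ 0, data rate S, and a normalized altitude x ≥ 0. For every coverage radius R > 0, the UAV-recall-frequency Φ(R) := (A/(π·R²))·(P_t(R, λ, R·x, S) + P_c)/E_b satisfies Φ(R) = (A/(π·E_b))·( λ·(2^S − 1)·Γ(x)·R² + P_c/R² ). -/
open Real MeasureTheory intervalIntegral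

/-- Eq. (14): The UAV-recall-frequency
`Φ(R) = (A/(πR²))·(P_t(R, λ, R·x, S) + P_c)/E_b` equals
`(A/(π·E_b))·(λ·(2^S − 1)·Γ(x)·R² + P_c/R²)`. -/
theorem uav_recall_frequency_expression
    (a b η₀ η₁ K N₀ : ℝ) (ha : 0 < a) (hb : 0 < b) (hη₀ : 0 < η₀) (hη₁ : 0 < η₁)
    (hK : 0 < K) (hN₀ : 0 < N₀)
    (θ P₀ L : ℝ → ℝ → ℝ) (Pt : ℝ → ℝ → ℝ → ℝ → ℝ) (Γ : ℝ → ℝ)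
    (hθ : ∀ R h : ℝ, θ R h = (180 / π) * arctan (h / R))
    (hP₀ : ∀ R h : ℝ, P₀ R h = 1 / (1 + a * exp (-b * (θ R h - a))))
    (hL : ∀ R h : ℝ, L R h = K * (R ^ 2 + h ^ 2) * (η₁ + P₀ R h * (η₀ - η₁)))
    (hPt : ∀ Rb lam h S : ℝ,
      Pt Rb lam h S = lam * ((2 : ℝ) ^ S - 1) * ∫ R in (0 : ℝ)..Rb, 2 * π * R * L R h * N₀)
    (hΓ : ∀ x : ℝ, Γ x = ∫ R in (0 : ℝ)..(1 : ℝ), 2 * π * R * L R x * N₀)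
    (A Eb Pc lam S x : ℝ) (hA : 0 < A) (hEb : 0 < Eb) (hPc : 0 ≤ Pc)
    (hlam : 0 ≤ lam) (hx : 0 ≤ x)
    (Φ : ℝ → ℝ)
    (hΦ : ∀ R : ℝ, Φ R = (A / (π * R ^ 2)) * (Pt R lam (R * x) S + Pc) / Eb)
    (R : ℝ) (hR : 0 < R) :
    Φ R = (A / (π * Eb)) * (lam * ((2 : ℝ) ^ S - 1) * Γ x * R ^ 2 + Pc / R ^ 2) := by
  have hscale : ∀ t : ℝ, L (R * t) (R * x) = R ^ 2 * L t x := by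
    intro t
    have hang : θ (R * t) (R * x) = θ t x := by
      rw [hθ, hθ, mul_div_mul_left _ _ hR.ne']
    rw [hL, hL, hP₀, hP₀, hang]
    ring
  have hint : ∫ r in (0 : ℝ)..R, 2 * π * r * L r (R * x) * N₀ = R ^ 4 * Γ x := by
    have hsubst := intervalIntegral.mul_integral_comp_mul_left (a := 0) (b := 1) R
      (f := fun r => 2 * π * r * L r (R * x) * N₀)
    rw [mul_zero, mul_one] at hsubst
    rw [← hsubst, hΓ, ← intervalIntegral.integral_const_mul,
      ← intervalIntegral.integral_const_mul]
    congr 1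
    ext t
    rw [hscale]
    ring
  rw [hΦ, hPt, hint]
  field_simp
end
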